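/- Let $(x_n)_{n \geq 1}$ be a sequence in $[0,1)$ with asymptotic distribution given by an absolutely continuous measure with bounded density $g$ on $[0,1]$, and suppose the pair correlation limit $F(s)$ exists in $[0,\infty)$ for every $s > 0$. Then $\limsup_{s \to \infty} \frac{F(s)}{2s} \geq \int_0^1 g(x)^2\,dx$. -/

import Mathlib

open Finset Filter MeasureTheory

/-- Distance to the nearest integer. -/
noncomputable def distToInt (t : ℝ) : ℝ := |t - round t|

/-- The pairs of distinct indices in `[1, N]` whose points lie within distance `s / N`. -/
noncomputable def closePairs (x : ℕ → ℝ) (N : ℕ) (s : ℝ) : Finset (ℕ × ℕ) :=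
  (Finset.Icc 1 N ×ˢ Finset.Icc 1 N).filter (fun p : ℕ × ℕ =>
    p.1 ≠ p.2 ∧ distToInt (x p.1 - x p.2) ≤ s / N)

lemma distToInt_le_abs (t : ℝ) : distToInt t ≤ |t| := by
  simpa [distToInt] using round_le t 0

lemma sub_le_sum_ite_le (S : ℕ) {y : ℝ} (hy : 0 ≤ y) :
    (S : ℝ) - y ≤ ∑ r ∈ Finset.Icc 1 S, if y ≤ r then (1 : ℝ) else 0 := by
  induction S with
  | zero => simpa using hy
  | succ S ih =>
    rw [Finset.sum_Icc_succ_top (by omega)]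
    by_cases h : y ≤ ((S + 1 : ℕ) : ℝ)
    · rw [if_pos h]; push_cast; linarith
    · rw [if_neg h]
      have : (0 : ℝ) ≤ ∑ r ∈ Finset.Icc 1 S, if y ≤ r then (1 : ℝ) else 0 :=
        Finset.sum_nonneg fun _ _ => by split_ifs <;> norm_num
      linarith

lemma volume_real_Ioc_inter_Ioc (a b h : ℝ) :
    volume.real (Set.Ioc (a - h) a ∩ Set.Ioc (b - h) b) = max (h - |a - b|) 0 := by
  rw [Set.Ioc_inter_Ioc, Real.volume_real_Ioc]
  congr 1
  rcases le_total a b with hab | hab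
  · rw [min_eq_left hab, max_eq_right (by linarith), abs_of_nonpos (by linarith)]; ring
  · rw [min_eq_right hab, max_eq_left (by linarith), abs_of_nonneg (by linarith)]; ring

/-- Expanding `0 ≤ ∫ (∑ₙ 1_(xₙ - h, xₙ] - c φ)²`. -/
lemma window_variance_nonneg (T : Finset ℕ) (x : ℕ → ℝ) (h c : ℝ) {φ : ℝ → ℝ}
    (hφ : Continuous φ) (hφ2 : MemLp φ 2) :
    0 ≤ (∑ p ∈ T ×ˢ T,
        volume.real (Set.Ioc (x p.1 - h) (x p.1) ∩ Set.Ioc (x p.2 - h) (x p.2)))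
      - 2 * c * (∑ n ∈ T, ∫ t in Set.Ioc (x n - h) (x n), φ t) + c ^ 2 * ∫ t, φ t ^ 2 := by
  have hI : ∀ n, IntegrableOn φ (Set.Ioc (x n - h) (x n)) := fun n =>
    hφ.integrableOn_Ioc
  have hI' : ∀ n, Integrable ((Set.Ioc (x n - h) (x n)).indicator φ) := fun n =>
    (hI n).integrable_indicator measurableSet_Ioc
  have hP : ∀ p : ℕ × ℕ, Integrable
      ((Set.Ioc (x p.1 - h) (x p.1) ∩ Set.Ioc (x p.2 - h) (x p.2)).indicator
        (1 : ℝ → ℝ)) := fun p => by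
    refine IntegrableOn.integrable_indicator ?_ (measurableSet_Ioc.inter measurableSet_Ioc)
    rw [Set.Ioc_inter_Ioc]
    exact continuous_const.integrableOn_Ioc
  have h1 : ∫ t, ∑ p ∈ T ×ˢ T, (Set.Ioc (x p.1 - h) (x p.1) ∩ Set.Ioc (x p.2 - h) (x p.2)).indicator
      (1 : ℝ → ℝ) t = ∑ p ∈ T ×ˢ T,
        volume.real (Set.Ioc (x p.1 - h) (x p.1) ∩ Set.Ioc (x p.2 - h) (x p.2)) := by
    rw [integral_finsetSum _ fun p _ => hP p]
    exact Finset.sum_congr rfl fun p _ =>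
      integral_indicator_one (measurableSet_Ioc.inter measurableSet_Ioc)
  have h2 : ∫ t, ∑ n ∈ T, (Set.Ioc (x n - h) (x n)).indicator φ t
      = ∑ n ∈ T, ∫ t in Set.Ioc (x n - h) (x n), φ t := by
    rw [integral_finsetSum _ fun n _ => hI' n]
    exact Finset.sum_congr rfl fun n _ => integral_indicator measurableSet_Ioc
  rw [← h1, ← h2, ← integral_const_mul, ← integral_const_mul, ← integral_sub, ← integral_add]
  · refine integral_nonneg fun t => ?_
    have key : (∑ p ∈ T ×ˢ T, (Set.Ioc (x p.1 - h) (x p.1) ∩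
          Set.Ioc (x p.2 - h) (x p.2)).indicator (1 : ℝ → ℝ) t)
        - 2 * c * (∑ n ∈ T, (Set.Ioc (x n - h) (x n)).indicator φ t) + c ^ 2 * φ t ^ 2
        = ((∑ n ∈ T, (Set.Ioc (x n - h) (x n)).indicator (1 : ℝ → ℝ) t) - c * φ t) ^ 2 := by
      have e1 : (∑ n ∈ T, (Set.Ioc (x n - h) (x n)).indicator φ t)
          = (∑ n ∈ T, (Set.Ioc (x n - h) (x n)).indicator (1 : ℝ → ℝ) t) * φ t := by
        rw [Finset.sum_mul]
        refine Finset.sum_congr rfl fun n _ => ?_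
        by_cases ht : t ∈ Set.Ioc (x n - h) (x n) <;> simp [ht]
      have e2 : (∑ p ∈ T ×ˢ T, (Set.Ioc (x p.1 - h) (x p.1) ∩
          Set.Ioc (x p.2 - h) (x p.2)).indicator (1 : ℝ → ℝ) t)
          = (∑ n ∈ T, (Set.Ioc (x n - h) (x n)).indicator (1 : ℝ → ℝ) t) ^ 2 := by
        rw [sq, Finset.sum_mul_sum, Finset.sum_product]
        refine Finset.sum_congr rfl fun m _ => Finset.sum_congr rfl fun n _ => ?_
        rw [Set.inter_indicator_one]
        rfl
      rw [e1, e2]; ring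
    show 0 ≤ (∑ p ∈ T ×ˢ T, (Set.Ioc (x p.1 - h) (x p.1) ∩
          Set.Ioc (x p.2 - h) (x p.2)).indicator (1 : ℝ → ℝ) t)
        - 2 * c * (∑ n ∈ T, (Set.Ioc (x n - h) (x n)).indicator φ t) + c ^ 2 * φ t ^ 2
    rw [key]
    positivity
  · exact (integrable_finsetSum _ fun p _ => hP p).sub
      ((integrable_finsetSum _ fun n _ => hI' n).const_mul _)
  · exact hφ2.integrable_sq.const_mul _
  · exact integrable_finsetSum _ fun p _ => hP p
  · exact (integrable_finsetSum _ fun n _ => hI' n).const_mul _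

lemma sum_overlap_le (x : ℕ → ℝ) {N : ℕ} (hN : 0 < N) (S : ℕ) :
    ∑ p ∈ Finset.Icc 1 N ×ˢ Finset.Icc 1 N,
        volume.real (Set.Ioc (x p.1 - S / N) (x p.1) ∩ Set.Ioc (x p.2 - S / N) (x p.2))
      ≤ S + ∑ r ∈ Finset.Icc 1 S, ((closePairs x N r).card : ℝ) / N := by
  have hN' : (0 : ℝ) < N := by exact_mod_cast hN
  have hp : ∀ p ∈ Finset.Icc 1 N ×ˢ Finset.Icc 1 N,
      volume.real (Set.Ioc (x p.1 - S / N) (x p.1) ∩ Set.Ioc (x p.2 - S / N) (x p.2))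
      ≤ (if p.1 = p.2 then (S : ℝ) / N else 0) + ∑ r ∈ Finset.Icc 1 S,
        (if p.1 ≠ p.2 ∧ distToInt (x p.1 - x p.2) ≤ (r : ℝ) / N then (1 : ℝ) else 0) / N := by
    rintro ⟨m, n⟩ -
    rw [volume_real_Ioc_inter_Ioc]
    by_cases hmn : m = n
    · subst hmn
      simp only [sub_self, abs_zero, sub_zero, if_true, ne_eq, not_true_eq_false, false_and,
        if_false, zero_div, Finset.sum_const_zero, add_zero]
      exact max_le le_rfl (by positivity)
    · simp only [hmn, if_false, ne_eq, not_false_eq_true, true_and, zero_add]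
      refine max_le ?_ (Finset.sum_nonneg fun _ _ => by split_ifs <;> positivity)
      have h0 := sub_le_sum_ite_le S (y := N * |x m - x n|) (by positivity)
      rw [← Finset.sum_div, le_div_iff₀ hN']
      calc ((S : ℝ) / N - |x m - x n|) * N = S - N * |x m - x n| := by field_simp
        _ ≤ _ := h0
        _ ≤ _ := Finset.sum_le_sum fun r _ => by
          by_cases hr : (N : ℝ) * |x m - x n| ≤ r
          · have : distToInt (x m - x n) ≤ (r : ℝ) / N :=
              (distToInt_le_abs _).trans (by rw [le_div_iff₀ hN']; linarith)
            rw [if_pos hr, if_pos this]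
          · rw [if_neg hr]; split_ifs <;> norm_num
  refine (Finset.sum_le_sum hp).trans (le_of_eq ?_)
  rw [Finset.sum_add_distrib]
  congr 1
  · rw [Finset.sum_product]
    simp only [Finset.sum_ite_eq]
    rw [Finset.sum_congr rfl (g := fun _ => (S : ℝ) / N) fun i hi => if_pos hi]
    simp only [Finset.sum_const, Nat.card_Icc, nsmul_eq_mul]
    push_cast [Nat.add_sub_cancel]
    field_simp
  · rw [Finset.sum_comm]
    refine Finset.sum_congr rfl fun r _ => ?_
    rw [← Finset.sum_div, Finset.sum_boole]
    rfl

lemma tendsto_average_of_uniformContinuous {x : ℕ → ℝ} (hx : ∀ n, x n ∈ Set.Ico (0 : ℝ) 1)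
    {g : ℝ → ℝ} (hg0 : ∀ t ∈ Set.Icc (0 : ℝ) 1, 0 ≤ g t)
    (hgInt : IntegrableOn g (Set.Icc (0 : ℝ) 1))
    (hdist : ∀ t ∈ Set.Icc (0 : ℝ) 1,
      Tendsto (fun N : ℕ =>
        (((Finset.Icc 1 N).filter (fun n => x n ≤ t)).card : ℝ) / N)
        atTop (nhds (∫ u in (0:ℝ)..t, g u)))
    {φ : ℝ → ℝ} (hφ : UniformContinuous φ) :
    Tendsto (fun N : ℕ => (∑ n ∈ Finset.Icc 1 N, φ (x n)) / N) atTop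
      (nhds (∫ u in (0:ℝ)..1, φ u * g u)) := by
  have hgI : ∀ a ∈ Set.Icc (0 : ℝ) 1, ∀ b ∈ Set.Icc (0 : ℝ) 1,
      IntervalIntegrable g volume a b := fun a ha b hb =>
    (hgInt.mono_set (Set.uIcc_subset_Icc ha hb)).intervalIntegrable
  have hφgI : ∀ a ∈ Set.Icc (0 : ℝ) 1, ∀ b ∈ Set.Icc (0 : ℝ) 1,
      IntervalIntegrable (fun u => φ u * g u) volume a b := fun a ha b hb =>
    (hgI a ha b hb).continuousOn_mul hφ.continuous.continuousOn
  set I := ∫ u in (0:ℝ)..1, g u with hI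
  have hI0 : 0 ≤ I := intervalIntegral.integral_nonneg zero_le_one hg0
  rw [Metric.tendsto_atTop]
  intro ε' hε'
  set ε := ε' / (2 + I) with hε_def
  have hε : 0 < ε := by positivity
  obtain ⟨δ, hδ, hφδ⟩ := Metric.uniformContinuous_iff.1 hφ ε hε
  obtain ⟨M, hM⟩ := exists_nat_gt (1 / δ)
  have hM0 : (0 : ℝ) < M := lt_trans (by positivity) hM
  have hMδ : 1 / (M : ℝ) < δ := by
    rw [div_lt_iff₀ hδ] at hM
    rw [div_lt_iff₀ hM0]; linarith
  have hmem : ∀ k : ℕ, k ≤ M → (k : ℝ) / M ∈ Set.Icc (0 : ℝ) 1 := fun k hk =>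
    ⟨by positivity, (div_le_one hM0).2 (by exact_mod_cast hk)⟩
  have hcard : ∀ k ∈ Finset.range M, Tendsto (fun N : ℕ =>
      (((Finset.Icc 1 N).filter (fun n => ⌈M * x n⌉₊ = k + 1)).card : ℝ) / N) atTop
      (nhds (∫ u in ((k : ℕ) / M : ℝ)..((k + 1 : ℕ) / M : ℝ), g u)) := by
    intro k hk
    have hk := Finset.mem_range.1 hk
    have h1 := hmem k hk.le
    have h2 := hmem (k + 1) hk
    have := (hdist _ h2).sub (hdist _ h1)
    rw [intervalIntegral.integral_interval_sub_left (hgI _ (by simp) _ h2)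
      (hgI _ (by simp) _ h1)] at this
    refine this.congr fun N => ?_
    rw [← sub_div]
    congr 1
    have hsub : (Finset.Icc 1 N).filter (fun n => x n ≤ (k : ℝ) / M) ⊆
        (Finset.Icc 1 N).filter (fun n => x n ≤ ((k + 1 : ℕ) : ℝ) / M) := by
      refine Finset.monotone_filter_right _ fun n _ hn => hn.trans ?_
      gcongr; simp
    rw [← Nat.cast_sub (Finset.card_le_card hsub), ← Finset.card_sdiff_of_subset hsub]
    congr 2
    ext n
    simp only [Finset.mem_sdiff, Finset.mem_filter, not_and, not_le]
    rw [Nat.ceil_eq_iff (by omega), le_div_iff₀ hM0, div_lt_iff₀ hM0, mul_comm (x n)]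
    simp only [Nat.add_sub_cancel]
    tauto
  have hcard0 : Tendsto (fun N : ℕ =>
      (((Finset.Icc 1 N).filter (fun n => ⌈M * x n⌉₊ = 0)).card : ℝ) / N) atTop (nhds 0) := by
    have := hdist 0 (by simp)
    rw [intervalIntegral.integral_same] at this
    refine this.congr fun N => ?_
    congr 3
    ext n
    simp only [Finset.mem_filter, Nat.ceil_eq_zero, mul_nonpos_iff_pos_imp_nonpos, hM0,
      forall_const]
    have := (hx n).1
    constructor
    · exact fun h => ⟨h.1, h.2, fun _ => hM0.le⟩
    · exact fun h => ⟨h.1, h.2.1⟩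
  have hlim : Tendsto (fun N : ℕ => (∑ n ∈ Finset.Icc 1 N, φ (⌈M * x n⌉₊ / M)) / N) atTop
      (nhds (∑ k ∈ Finset.range M, φ ((k + 1 : ℕ) / M) *
        ∫ u in ((k : ℕ) / M : ℝ)..((k + 1 : ℕ) / M : ℝ), g u)) := by
    have := (tendsto_finsetSum _ fun k hk => (hcard k hk).const_mul (φ ((k + 1 : ℕ) / M))).add
      (hcard0.const_mul (φ ((0 : ℕ) / M)))
    rw [mul_zero, add_zero] at this
    refine this.congr fun N => ?_
    rw [← Finset.sum_range_succ' (fun k => φ ((k : ℕ) / M) *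
      ((((Finset.Icc 1 N).filter (fun n => ⌈M * x n⌉₊ = k)).card : ℝ) / N)),
      ← Finset.sum_fiberwise_of_maps_to (s := Finset.Icc 1 N) (t := Finset.range (M + 1))
        (g := fun n => ⌈M * x n⌉₊), Finset.sum_div]
    · refine Finset.sum_congr rfl fun k _ => ?_
      rw [Finset.sum_congr rfl (g := fun _ => φ ((k : ℕ) / M))]
      · rw [Finset.sum_const, nsmul_eq_mul]; ring
      · intro n hn; rw [(Finset.mem_filter.1 hn).2]
    · intro n _
      rw [Finset.mem_range, Nat.lt_succ_iff, Nat.ceil_le]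
      nlinarith [(hx n).2]
  have happrox : ∀ u ∈ Set.Icc (0 : ℝ) 1, |φ u - φ (⌈M * u⌉₊ / M)| ≤ ε := by
    intro u hu
    refine (hφδ ?_).le
    have h1 := Nat.le_ceil (M * u)
    have h2 := Nat.ceil_lt_add_one (mul_nonneg hM0.le hu.1)
    rw [dist_comm, Real.dist_eq, abs_of_nonneg]
    · refine lt_of_le_of_lt ?_ hMδ
      rw [sub_le_iff_le_add, div_le_iff₀ hM0, add_mul, div_mul_cancel₀ _ hM0.ne']
      linarith
    · rw [sub_nonneg, le_div_iff₀ hM0]; linarith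
  have hint : |(∫ u in (0:ℝ)..1, φ u * g u) - ∑ k ∈ Finset.range M, φ ((k + 1 : ℕ) / M) *
        ∫ u in ((k : ℕ) / M : ℝ)..((k + 1 : ℕ) / M : ℝ), g u| ≤ ε * I := by
    have s1 := intervalIntegral.sum_integral_adjacent_intervals (μ := volume)
      (f := fun u => φ u * g u) (a := fun k : ℕ => (k : ℝ) / M) (n := M)
      fun k hk => hφgI _ (hmem k hk.le) _ (hmem (k + 1) hk)
    have s2 := intervalIntegral.sum_integral_adjacent_intervals (μ := volume)
      (f := g) (a := fun k : ℕ => (k : ℝ) / M) (n := M)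
      fun k hk => hgI _ (hmem k hk.le) _ (hmem (k + 1) hk)
    simp only [Nat.cast_zero, zero_div, div_self hM0.ne'] at s1 s2
    rw [hI, ← s1, ← s2, ← Finset.sum_sub_distrib, Finset.mul_sum]
    refine (Finset.abs_sum_le_sum_abs _ _).trans (Finset.sum_le_sum fun k hk => ?_)
    have hk := Finset.mem_range.1 hk
    have h1 := hmem k hk.le
    have h2 := hmem (k + 1) hk
    have hle : (k : ℝ) / M ≤ ((k + 1 : ℕ) : ℝ) / M := by gcongr; simp
    rw [← intervalIntegral.integral_const_mul, ← intervalIntegral.integral_const_mul,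
      ← intervalIntegral.integral_sub (hφgI _ h1 _ h2) ((hgI _ h1 _ h2).const_mul _),
      ← Real.norm_eq_abs]
    refine intervalIntegral.norm_integral_le_of_norm_le hle (ae_of_all _ fun u hu => ?_)
      ((hgI _ h1 _ h2).const_mul _)
    have hu01 : u ∈ Set.Icc (0 : ℝ) 1 := ⟨h1.1.trans hu.1.le, hu.2.trans h2.2⟩
    have hc : ⌈M * u⌉₊ = k + 1 := by
      rw [Nat.ceil_eq_iff (by omega), Nat.add_sub_cancel]
      have := hu.1; have := hu.2
      rw [div_lt_iff₀ hM0] at *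
      rw [le_div_iff₀ hM0] at *
      constructor <;> linarith
    have := happrox u hu01
    rw [hc] at this
    rw [← sub_mul, norm_mul, Real.norm_eq_abs, Real.norm_of_nonneg (hg0 u hu01)]
    exact mul_le_mul_of_nonneg_right this (hg0 u hu01)
  obtain ⟨N₀, hN₀⟩ := Metric.tendsto_atTop.1 hlim (ε / 2) (by positivity)
  refine ⟨max N₀ 1, fun N hN => ?_⟩
  have hN1 : 0 < N := lt_of_lt_of_le one_pos ((le_max_right _ _).trans hN)
  have hN1' : (0 : ℝ) < N := by exact_mod_cast hN1
  have hd := hN₀ N ((le_max_left _ _).trans hN)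
  have havg : |(∑ n ∈ Finset.Icc 1 N, φ (x n)) / N
      - (∑ n ∈ Finset.Icc 1 N, φ (⌈M * x n⌉₊ / M)) / N| ≤ ε := by
    rw [← sub_div, ← Finset.sum_sub_distrib, abs_div, abs_of_pos hN1', div_le_iff₀ hN1']
    refine (Finset.abs_sum_le_sum_abs _ _).trans ((Finset.sum_le_card_nsmul _ _ ε
      fun n _ => happrox _ ⟨(hx n).1, (hx n).2.le⟩).trans (le_of_eq ?_))
    simp [mul_comm]
  have hfin : ε * (2 + I) = ε' := div_mul_cancel₀ _ (by positivity)
  rw [Real.dist_eq] at hd ⊢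
  rw [abs_lt] at *
  rw [abs_le] at *
  constructor <;> linarith [hd.1, hd.2, hint.1, hint.2, havg.1, havg.2]

lemma window_lower_bound {x : ℕ → ℝ} (hx : ∀ n, x n ∈ Set.Ico (0 : ℝ) 1)
    {g : ℝ → ℝ} (hg0 : ∀ t ∈ Set.Icc (0 : ℝ) 1, 0 ≤ g t)
    (hgInt : IntegrableOn g (Set.Icc (0 : ℝ) 1))
    (hdist : ∀ t ∈ Set.Icc (0 : ℝ) 1,
      Tendsto (fun N : ℕ =>
        (((Finset.Icc 1 N).filter (fun n => x n ≤ t)).card : ℝ) / N)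
        atTop (nhds (∫ u in (0:ℝ)..t, g u)))
    {F : ℝ → ℝ}
    (hF : ∀ s : ℝ, 0 < s →
      Tendsto (fun N : ℕ => ((closePairs x N s).card : ℝ) / N) atTop (nhds (F s)))
    {φ : ℝ → ℝ} (hφ : Continuous φ) (hφc : HasCompactSupport φ) (S : ℕ) :
    (S : ℝ) ^ 2 * (2 * (∫ u in (0:ℝ)..1, φ u * g u) - ∫ t, φ t ^ 2)
      ≤ S + ∑ r ∈ Finset.Icc 1 S, F r := by
  have hφ2 : MemLp φ 2 := hφ.memLp_of_hasCompactSupport hφc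
  have hφu : UniformContinuous φ := hφc.uniformContinuous_of_continuous hφ
  have hlim1 := tendsto_average_of_uniformContinuous hx hg0 hgInt hdist hφu
  have hlim2 : Tendsto (fun N : ℕ => ∑ r ∈ Finset.Icc 1 S, ((closePairs x N r).card : ℝ) / N)
      atTop (nhds (∑ r ∈ Finset.Icc 1 S, F r)) :=
    tendsto_finsetSum _ fun r hr => hF r (by
      have := (Finset.mem_Icc.1 hr).1; exact_mod_cast this)
  have main : ∀ ε : ℝ, 0 < ε → (S : ℝ) ^ 2 * (2 * ((∫ u in (0:ℝ)..1, φ u * g u) - ε)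
      - ∫ t, φ t ^ 2) ≤ S + ∑ r ∈ Finset.Icc 1 S, F r := by
    intro ε hε
    obtain ⟨δ, hδ, hφδ⟩ := Metric.uniformContinuous_iff.1 hφu ε hε
    refine le_of_tendsto_of_tendsto
      ((((hlim1.sub_const ε).const_mul 2).sub_const (∫ t, φ t ^ 2)).const_mul ((S : ℝ) ^ 2))
      (hlim2.const_add (S : ℝ)) ?_
    have hsmall : ∀ᶠ N : ℕ in atTop, (S : ℝ) / N < δ :=
      (tendsto_const_div_atTop_nhds_zero_nat (S : ℝ)).eventually_lt_const hδ
    filter_upwards [hsmall, eventually_gt_atTop 0] with N hN hN0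
    have hN' : (0 : ℝ) < N := by exact_mod_cast hN0
    have hv := window_variance_nonneg (Finset.Icc 1 N) x (S / N) S hφ hφ2
    have ho := sum_overlap_le x hN0 S
    have hw : S * ((∑ n ∈ Finset.Icc 1 N, φ (x n)) / N - ε)
        ≤ ∑ n ∈ Finset.Icc 1 N, ∫ t in Set.Ioc (x n - S / N) (x n), φ t := by
      have h1 : ∀ n ∈ Finset.Icc 1 N, (S : ℝ) / N * (φ (x n) - ε)
          ≤ ∫ t in Set.Ioc (x n - S / N) (x n), φ t := by
        intro n _
        have h := setIntegral_mono_on (μ := volume) (s := Set.Ioc (x n - S / N) (x n))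
          (f := fun _ => φ (x n) - ε) (g := φ) (continuous_const.integrableOn_Ioc)
          hφ.integrableOn_Ioc measurableSet_Ioc fun t ht => by
            have hd : dist t (x n) < δ := by
              rw [Real.dist_eq, abs_lt]
              constructor <;> linarith [ht.1, ht.2]
            have := (abs_lt.1 (hφδ hd)).1
            linarith
        rwa [setIntegral_const, Real.volume_real_Ioc_of_le (by
          have : (0 : ℝ) ≤ S / N := by positivity
          linarith), sub_sub_cancel, smul_eq_mul] at h
      refine le_trans (le_of_eq ?_) (Finset.sum_le_sum h1)
      rw [← Finset.mul_sum, Finset.sum_sub_distrib, Finset.sum_const, Nat.card_Icc,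
        Nat.add_sub_cancel, nsmul_eq_mul]
      field_simp
    have hw' := mul_le_mul_of_nonneg_left hw (by positivity : (0 : ℝ) ≤ 2 * S)
    nlinarith [hw', hv, ho]
  have hc : Tendsto (fun ε : ℝ => (S : ℝ) ^ 2 * (2 * ((∫ u in (0:ℝ)..1, φ u * g u) - ε)
      - ∫ t, φ t ^ 2)) (nhdsWithin 0 (Set.Ioi 0))
      (nhds ((S : ℝ) ^ 2 * (2 * ((∫ u in (0:ℝ)..1, φ u * g u) - 0) - ∫ t, φ t ^ 2))) :=
    Continuous.continuousWithinAt (by fun_prop)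
  rw [sub_zero] at hc
  exact le_of_tendsto hc (eventually_mem_nhdsWithin.mono main)

lemma sq_integral_le_sum {x : ℕ → ℝ} (hx : ∀ n, x n ∈ Set.Ico (0 : ℝ) 1)
    {g : ℝ → ℝ} (hg0 : ∀ t ∈ Set.Icc (0 : ℝ) 1, 0 ≤ g t)
    (hgInt : IntegrableOn g (Set.Icc (0 : ℝ) 1))
    {C : ℝ} (hgbd : ∀ t ∈ Set.Icc (0 : ℝ) 1, g t ≤ C)
    (hdist : ∀ t ∈ Set.Icc (0 : ℝ) 1,
      Tendsto (fun N : ℕ =>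
        (((Finset.Icc 1 N).filter (fun n => x n ≤ t)).card : ℝ) / N)
        atTop (nhds (∫ u in (0:ℝ)..t, g u)))
    {F : ℝ → ℝ}
    (hF : ∀ s : ℝ, 0 < s →
      Tendsto (fun N : ℕ => ((closePairs x N s).card : ℝ) / N) atTop (nhds (F s)))
    (S : ℕ) :
    (S : ℝ) ^ 2 * (∫ u in (0:ℝ)..1, g u ^ 2) ≤ S + ∑ r ∈ Finset.Icc 1 S, F r := by
  set G : ℝ → ℝ := (Set.Icc (0 : ℝ) 1).indicator g with hG
  have hGm : MemLp G 2 := by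
    rw [hG, memLp_indicator_iff_restrict measurableSet_Icc]
    refine MemLp.of_bound hgInt.aestronglyMeasurable C ?_
    filter_upwards [ae_restrict_mem measurableSet_Icc] with t ht
    rw [Real.norm_of_nonneg (hg0 t ht)]
    exact hgbd t ht
  have hGg : ∀ ψ : ℝ → ℝ, ∫ u in (0:ℝ)..1, ψ u * g u = ∫ t, ψ t * G t := fun ψ => by
    rw [intervalIntegral.integral_of_le zero_le_one, ← integral_Icc_eq_integral_Ioc,
      ← integral_indicator measurableSet_Icc]
    congr 1; ext t
    by_cases ht : t ∈ Set.Icc (0 : ℝ) 1 <;> simp [hG, ht]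
  have hG2 : ∫ u in (0:ℝ)..1, g u ^ 2 = ∫ t, G t ^ 2 := by
    rw [intervalIntegral.integral_of_le zero_le_one, ← integral_Icc_eq_integral_Ioc,
      ← integral_indicator measurableSet_Icc]
    congr 1; ext t
    by_cases ht : t ∈ Set.Icc (0 : ℝ) 1 <;> simp [hG, ht]
  rw [hG2]
  have main : ∀ ε : ℝ, 0 < ε → (S : ℝ) ^ 2 * ((∫ t, G t ^ 2) - ε)
      ≤ S + ∑ r ∈ Finset.Icc 1 S, F r := by
    intro ε hε
    obtain ⟨φ, hφc, hφε, hφ, hφm⟩ := MemLp.exists_hasCompactSupport_integral_rpow_sub_le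
      (p := 2) (by norm_num) (f := G) (μ := volume) (by simpa using hGm) hε
    have hφm : MemLp φ 2 := by simpa using hφm
    refine le_trans ?_ (window_lower_bound hx hg0 hgInt hdist hF hφ hφc S)
    refine mul_le_mul_of_nonneg_left ?_ (by positivity)
    rw [hGg]
    have hprod : Integrable (fun t => φ t * G t) := hφm.integrable_mul hGm
    have : ∫ t, ‖G t - φ t‖ ^ (2 : ℝ)
        = (∫ t, G t ^ 2) - 2 * (∫ t, φ t * G t) + ∫ t, φ t ^ 2 := by
      rw [← integral_const_mul, ← integral_sub hGm.integrable_sq (hprod.const_mul 2),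
        ← integral_add _ hφm.integrable_sq]
      swap
      · exact hGm.integrable_sq.sub (hprod.const_mul 2)
      congr 1; ext t
      rw [Real.rpow_two, Real.norm_eq_abs, sq_abs]
      ring
    linarith
  have hc : Tendsto (fun ε : ℝ => (S : ℝ) ^ 2 * ((∫ t, G t ^ 2) - ε))
      (nhdsWithin 0 (Set.Ioi 0)) (nhds ((S : ℝ) ^ 2 * ((∫ t, G t ^ 2) - 0))) :=
    Continuous.continuousWithinAt (by fun_prop)
  rw [sub_zero] at hc
  exact le_of_tendsto hc (eventually_mem_nhdsWithin.mono main)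

lemma card_filter_eq_add_le {ι A : Type*} [AddGroup A] [Fintype A] [DecidableEq A]
    (T : Finset ι) (β : ι → A) (k : A) :
    ((T ×ˢ T).filter fun p => β p.1 = β p.2 + k).card
      ≤ ((T ×ˢ T).filter fun p => β p.1 = β p.2).card := by
  set c : A → ℕ := fun z => (T.filter fun n => β n = z).card with hc
  have hcount : ∀ k : A, ((T ×ˢ T).filter fun p => β p.1 = β p.2 + k).card
      = ∑ z, c (z + k) * c z := by
    intro k
    rw [Finset.card_eq_sum_card_fiberwise (f := fun p => β p.2) (t := Finset.univ)
      (fun _ _ => Finset.mem_coe.2 (Finset.mem_univ _))]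
    refine Finset.sum_congr rfl fun z _ => ?_
    rw [hc, ← Finset.card_product]
    congr 1
    ext p
    simp only [Finset.mem_filter, Finset.mem_product]
    constructor
    · rintro ⟨⟨⟨h1, h2⟩, h3⟩, h4⟩; exact ⟨⟨h1, h4 ▸ h3⟩, h2, h4⟩
    · rintro ⟨⟨h1, h3⟩, h2, h4⟩; exact ⟨⟨⟨h1, h2⟩, h4.symm ▸ h3⟩, h4⟩
  have h0 := hcount 0
  simp only [add_zero] at h0
  rw [hcount k, h0]
  have hshift : ∑ z, c (z + k) * c (z + k) = ∑ z, c z * c z :=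
    Fintype.sum_equiv (Equiv.addRight k) _ _ fun _ => rfl
  have : 2 * ∑ z, c (z + k) * c z ≤ ∑ z, c (z + k) * c (z + k) + ∑ z, c z * c z := by
    rw [Finset.mul_sum, ← Finset.sum_add_distrib]
    refine Finset.sum_le_sum fun z _ => ?_
    have := two_mul_le_add_sq (c (z + k)) (c z)
    linarith
  omega

lemma card_closePairs_le {x : ℕ → ℝ} (hx : ∀ n, x n ∈ Set.Ico (0 : ℝ) 1) {N : ℕ}
    (hN : 0 < N) (s : ℝ) :
    (closePairs x N s).card ≤ (2 * ⌈s⌉₊ + 3) * (N + (closePairs x N 1).card) := by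
  have : NeZero N := ⟨hN.ne'⟩
  have hN' : (0 : ℝ) < N := by exact_mod_cast hN
  set T := Finset.Icc 1 N with hT
  set b : ℕ → ℤ := fun n => ⌊(N : ℝ) * x n⌋ with hb
  set β : ℕ → ZMod N := fun n => (b n : ZMod N) with hβ
  have hb1 : ∀ n, (b n : ℝ) ≤ N * x n := fun n => Int.floor_le _
  have hb2 : ∀ n, (N : ℝ) * x n < b n + 1 := fun n => Int.lt_floor_add_one _
  have hsub : closePairs x N s ⊆ (Finset.Icc (-(⌈s⌉₊ + 1 : ℤ)) (⌈s⌉₊ + 1)).biUnion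
      fun k => (T ×ˢ T).filter fun p => β p.1 = β p.2 + (k : ZMod N) := by
    rintro ⟨m, n⟩ hp
    rw [closePairs, Finset.mem_filter] at hp
    obtain ⟨hmem, -, hd⟩ := hp
    simp only [distToInt] at hd
    set q := round (x m - x n)
    have hd' : |(N : ℝ) * x m - N * x n - N * q| ≤ s := by
      rw [le_div_iff₀ hN'] at hd
      rw [← mul_sub, ← mul_sub, abs_mul, abs_of_pos hN']
      linarith
    have hs : s ≤ ⌈s⌉₊ := Nat.le_ceil s
    rw [abs_le] at hd'
    rw [Finset.mem_biUnion]
    refine ⟨b m - b n - N * q, ?_, ?_⟩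
    · have h1 : ((b m - b n - N * q : ℤ) : ℝ) < ((⌈s⌉₊ + 2 - 1 : ℤ) : ℝ) := by
        push_cast; linarith [hb1 m, hb2 n]
      have h2 : ((-(⌈s⌉₊ + 1) : ℤ) : ℝ) < ((b m - b n - N * q : ℤ) : ℝ) := by
        push_cast; linarith [hb1 n, hb2 m]
      have h1 := Int.cast_lt.1 h1
      have h2 := Int.cast_lt.1 h2
      rw [Finset.mem_Icc]
      constructor <;> linarith
    · rw [Finset.mem_filter]
      refine ⟨hmem, ?_⟩
      simp [hβ]
  have hdiag : ((T ×ˢ T).filter fun p => β p.1 = β p.2).card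
      ≤ N + (closePairs x N 1).card := by
    have hT' : T.diag.card = N := by rw [Finset.diag_card, hT, Nat.card_Icc]; omega
    refine le_trans (Finset.card_le_card ?_)
      ((Finset.card_union_le T.diag (closePairs x N 1)).trans (by rw [hT']))
    rintro ⟨m, n⟩ hp
    rw [Finset.mem_filter, Finset.mem_product] at hp
    obtain ⟨⟨hm, hn⟩, he⟩ := hp
    rw [Finset.mem_union]
    by_cases hmn : m = n
    · exact Or.inl (Finset.mem_diag.2 ⟨hm, hmn⟩)
    · right
      rw [closePairs, Finset.mem_filter, Finset.mem_product]
      refine ⟨⟨hm, hn⟩, hmn, (distToInt_le_abs _).trans ?_⟩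
      have hr : ∀ n, 0 ≤ b n ∧ b n < N := fun n => by
        refine ⟨Int.floor_nonneg.2 (mul_nonneg hN'.le (hx n).1), Int.floor_lt.2 ?_⟩
        push_cast
        nlinarith [(hx n).2]
      have he' : b m = b n := by
        have := (ZMod.intCast_eq_intCast_iff _ _ _).1 he
        rwa [Int.ModEq, Int.emod_eq_of_lt (hr m).1 (hr m).2,
          Int.emod_eq_of_lt (hr n).1 (hr n).2] at this
      have he'' : (b m : ℝ) = b n := by exact_mod_cast he'
      rw [le_div_iff₀ hN', ← abs_of_pos hN', ← abs_mul, abs_le]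
      constructor <;> nlinarith [hb1 m, hb2 m, hb1 n, hb2 n]
  refine (Finset.card_le_card hsub).trans (Finset.card_biUnion_le.trans ?_)
  refine (Finset.sum_le_card_nsmul _ _ (N + (closePairs x N 1).card) fun k _ =>
    (card_filter_eq_add_le T β _).trans hdiag).trans (le_of_eq ?_)
  rw [Int.card_Icc, smul_eq_mul]
  congr 1
  omega

lemma pairCorrelation_div_le {x : ℕ → ℝ} (hx : ∀ n, x n ∈ Set.Ico (0 : ℝ) 1) {F : ℝ → ℝ}
    (hF : ∀ s : ℝ, 0 < s →
      Tendsto (fun N : ℕ => ((closePairs x N s).card : ℝ) / N) atTop (nhds (F s)))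
    {s : ℝ} (hs : 1 ≤ s) : F s / (2 * s) ≤ 4 * (1 + F 1) := by
  have hF1 : 0 ≤ F 1 := ge_of_tendsto' (hF 1 one_pos) fun N => by positivity
  have h : F s ≤ (2 * ⌈s⌉₊ + 3) * (1 + F 1) := by
    refine le_of_tendsto_of_tendsto (hF s (by linarith))
      (((hF 1 one_pos).const_add 1).const_mul (2 * (⌈s⌉₊ : ℝ) + 3)) ?_
    filter_upwards [eventually_gt_atTop 0] with N hN
    have hN' : (0 : ℝ) < N := by exact_mod_cast hN
    have h : ((closePairs x N s).card : ℝ)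
        ≤ (2 * ⌈s⌉₊ + 3) * (N + (closePairs x N 1).card) := by
      exact_mod_cast card_closePairs_le hx hN s
    rw [div_le_iff₀ hN']
    refine h.trans (le_of_eq ?_)
    field_simp
  have hc := Nat.ceil_lt_add_one (by linarith : 0 ≤ s)
  rw [div_le_iff₀ (by linarith)]
  nlinarith

theorem stmt_13 (x : ℕ → ℝ) (hx : ∀ n, x n ∈ Set.Ico (0 : ℝ) 1)
    (g : ℝ → ℝ) (hg0 : ∀ t ∈ Set.Icc (0 : ℝ) 1, 0 ≤ g t)
    (hgInt : IntegrableOn g (Set.Icc (0 : ℝ) 1))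
    (C : ℝ) (hgbd : ∀ t ∈ Set.Icc (0 : ℝ) 1, g t ≤ C)
    (hdist : ∀ t ∈ Set.Icc (0 : ℝ) 1,
      Tendsto (fun N : ℕ =>
        (((Finset.Icc 1 N).filter (fun n => x n ≤ t)).card : ℝ) / N)
        atTop (nhds (∫ u in (0:ℝ)..t, g u)))
    (F : ℝ → ℝ)
    (hF : ∀ s : ℝ, 0 < s →
      Tendsto (fun N : ℕ =>
        (((Finset.Icc 1 N ×ˢ Finset.Icc 1 N).filter (fun p : ℕ × ℕ =>
          p.1 ≠ p.2 ∧ distToInt (x p.1 - x p.2) ≤ s / N)).card : ℝ) / N)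
        atTop (nhds (F s))) :
    (∫ u in (0:ℝ)..1, g u ^ 2) ≤ Filter.limsup (fun s : ℝ => F s / (2 * s)) atTop := by
  have hF' : ∀ s : ℝ, 0 < s →
      Tendsto (fun N : ℕ => ((closePairs x N s).card : ℝ) / N) atTop (nhds (F s)) := hF
  have key := sq_integral_le_sum hx hg0 hgInt hgbd hdist hF'
  set I := ∫ u in (0:ℝ)..1, g u ^ 2
  by_contra! hlt
  obtain ⟨L, hL1, hL2⟩ := exists_between hlt
  have hbdd : IsBoundedUnder (· ≤ ·) atTop (fun s : ℝ => F s / (2 * s)) :=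
    isBoundedUnder_of_eventually_le (a := 4 * (1 + F 1))
      ((eventually_ge_atTop 1).mono fun s hs => pairCorrelation_div_le hx hF' hs)
  obtain ⟨R₀, hR₀⟩ := eventually_atTop.1 (eventually_lt_of_limsup_lt hL1 hbdd)
  obtain ⟨R, hR⟩ := exists_nat_ge R₀
  set D := (∑ r ∈ Finset.Icc 1 R, F r) - L * (R * (R + 1))
  have hsum : ∀ S : ℕ, R ≤ S → ∑ r ∈ Finset.Icc 1 S, F r ≤ D + L * (S * (S + 1)) := by
    intro S hS
    induction S, hS using Nat.le_induction with
    | base => simp [D]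
    | succ S hS ih =>
      rw [Finset.sum_Icc_succ_top (by omega)]
      have hS' : (R : ℝ) ≤ S := by exact_mod_cast hS
      have h := hR₀ ((S + 1 : ℕ) : ℝ) (by push_cast; linarith)
      rw [div_lt_iff₀ (by positivity)] at h
      push_cast at h ⊢
      linarith
  obtain ⟨S, hS⟩ := exists_nat_gt ((1 + |L| + |D|) / (I - L))
  have hIL : 0 < I - L := by linarith
  rw [div_lt_iff₀ hIL] at hS
  set P := max S (max R 1)
  have hSP : (S : ℝ) ≤ P := by exact_mod_cast le_max_left _ _
  have hP1 : (1 : ℝ) ≤ P := by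
    exact_mod_cast (le_max_right R 1).trans (le_max_right S _)
  have hP := (key P).trans (add_le_add_right
    (hsum P ((le_max_left R 1).trans (le_max_right S _))) _)
  have h1 : 1 + |L| + |D| < P * (I - L) := hS.trans_le (by gcongr)
  have h2 : (1 + |L| + |D|) * P < P * (I - L) * P := by gcongr
  have h3 : L * P ≤ |L| * P := by gcongr; exact le_abs_self L
  have h4 : D ≤ |D| * P := (le_abs_self D).trans (le_mul_of_one_le_right (abs_nonneg D) hP1)
  nlinarith
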